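/- arXiv:2002.11283 — 6 statements merged into one kernel-verified Lean document; each statement's English description precedes it below -/
import Mathlib

section
/- Let λ, μ > 0 with ρ = λ/μ ∈ (0,1). Suppose X and T are independent random variables on a probability space such that X is exponentially distributed with rate λ, T ≥ 0 almost surely, T and T·e^{-λT} are integrable, E[e^{-λT}] = 1-ρ, E[T] = 1/μ + ρ/(2μ(1-ρ)), and E[T·e^{-λT}] = (1-ρ)(e^{ρ}-1)/λ. Define Y = 1/μ + max(X - T, 0) (deterministic service time S = 1/μ). Then (E[Y²] + 2·E[T·Y]) / (2·E[Y]) = (ρ² + 2(1-ρ)(ρ + e^{ρ} - ρe^{ρ})) / (2λ(1-ρ)). -/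
open MeasureTheory ProbabilityTheory Real

/-!
Let `D = (X - T)⁺`, so that `Y = 1/μ + D`. The exponential law is memoryless: given `T = t ≥ 0`,
the overshoot `D` vanishes with probability `1 - e^{-λt}` and is otherwise again exponential of
rate `λ`, so `E[Dⁿ | T = t] = (n!/λⁿ) e^{-λt}` for `n ≥ 1`
(`integral_overshoot_pow`). Integrating this against the law of `T`, by independence and Fubini,
gives `E[g(T) Dⁿ] = (n!/λⁿ) E[g(T) e^{-λT}]` (`integral_mul_overshoot_pow`). The three cases
`E[D]`, `E[D²]` and `E[T D]` turn the hypotheses on `T` into closed forms, and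
the claim is then algebra; in particular `E[Y] = 1/λ`.
-/

/-- `expMeasure lam` is by definition the gamma measure of shape `1`, hence the density
`gammaPDF 1 lam`. The identity holds only almost everywhere: at `x = 0` the density is `lam`, while
the indicator of the open half-line vanishes. -/
lemma gammaPDF_one_toReal_ae {lam : ℝ} (hlam : 0 < lam) (f : ℝ → ℝ) :
    (fun x => (gammaPDF 1 lam x).toReal • f x) =ᵐ[volume]
      (Set.Ioi (0 : ℝ)).indicator (fun x => lam * exp (-(lam * x)) * f x) := by
  filter_upwards [compl_mem_ae_iff.mpr (measure_singleton (0 : ℝ))] with x hx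
  have hx0 : x ≠ 0 := hx
  have h := exponentialPDF_eq lam x
  unfold exponentialPDF exponentialPDFReal at h
  unfold gammaPDF
  rw [h]
  rcases lt_or_gt_of_ne hx0 with hneg | hpos
  · simp [hneg.not_ge, hneg.not_gt]
  · rw [if_pos hpos.le, ENNReal.toReal_ofReal (by positivity)]
    simp [hpos]

lemma integral_expMeasure {lam : ℝ} (hlam : 0 < lam) (f : ℝ → ℝ) :
    ∫ x, f x ∂(expMeasure lam) = ∫ x in Set.Ioi (0 : ℝ), lam * exp (-(lam * x)) * f x := by
  have hm : Measurable (gammaPDF 1 lam) := (measurable_gammaPDFReal 1 lam).ennreal_ofReal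
  unfold expMeasure gammaMeasure
  rw [integral_withDensity_eq_integral_toReal_smul hm (by simp [gammaPDF]),
    integral_congr_ae (gammaPDF_one_toReal_ae hlam f), integral_indicator measurableSet_Ioi]

lemma integrable_expMeasure_iff {lam : ℝ} (hlam : 0 < lam) (f : ℝ → ℝ) :
    Integrable f (expMeasure lam) ↔
      IntegrableOn (fun x => lam * exp (-(lam * x)) * f x) (Set.Ioi 0) := by
  have hm : Measurable (gammaPDF 1 lam) := (measurable_gammaPDFReal 1 lam).ennreal_ofReal
  unfold expMeasure gammaMeasure
  rw [integrable_withDensity_iff_integrable_smul' hm (by simp [gammaPDF]),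
    integrable_congr (gammaPDF_one_toReal_ae hlam f), integrable_indicator_iff measurableSet_Ioi]

lemma integral_pow_mul_exp {lam : ℝ} (hlam : 0 < lam) (n : ℕ) :
    ∫ x in Set.Ioi (0 : ℝ), lam * exp (-(lam * x)) * x ^ n = n.factorial / lam ^ n := by
  have h := Real.integral_rpow_mul_exp_neg_mul_Ioi (a := n + 1) (r := lam) (by positivity) hlam
  have e : ∀ x : ℝ, lam * exp (-(lam * x)) * x ^ n
      = lam * (x ^ ((n : ℝ) + 1 - 1) * exp (-(lam * x))) := by
    intro x
    rw [add_sub_cancel_right, Real.rpow_natCast]; ring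
  simp_rw [e]
  rw [integral_const_mul, h, Real.Gamma_nat_eq_factorial,
    Real.rpow_add_one (by positivity), Real.rpow_natCast, one_div, inv_pow]
  field_simp

lemma integrable_pow_expMeasure {lam : ℝ} (hlam : 0 < lam) (n : ℕ) :
    Integrable (fun x => x ^ n) (expMeasure lam) := by
  rw [integrable_expMeasure_iff hlam]
  -- A non-integrable function would have Bochner integral `0`, but this integral is `n! / λⁿ`.
  refine Integrable.of_integral_ne_zero ?_
  rw [integral_pow_mul_exp hlam]
  positivity

/-- Memorylessness: the moments of the overshoot of an exponential variable above a level
`t ≥ 0`. The exponent `n = 0` is excluded because `0 ^ 0 = 1` off the event `x > t`. -/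
lemma integral_overshoot_pow {lam t : ℝ} (hlam : 0 < lam) (ht : 0 ≤ t) {n : ℕ} (hn : n ≠ 0) :
    ∫ x, max (x - t) 0 ^ n ∂(expMeasure lam) = n.factorial / lam ^ n * exp (-lam * t) := by
  rw [integral_expMeasure hlam]
  have h1 : ∫ x in Set.Ioi (0 : ℝ), lam * exp (-(lam * x)) * max (x - t) 0 ^ n
      = ∫ x in Set.Ioi t, lam * exp (-(lam * x)) * max (x - t) 0 ^ n := by
    refine setIntegral_eq_of_subset_of_forall_sdiff_eq_zero measurableSet_Ioi
      (Set.Ioi_subset_Ioi ht) ?_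
    intro x hx
    have : x ≤ t := not_lt.mp hx.2
    simp [this, hn]
  have h2 := (measurePreserving_add_right volume t).setIntegral_preimage_emb
    (measurableEmbedding_addRight t)
    (fun x => lam * exp (-(lam * x)) * max (x - t) 0 ^ n) (Set.Ioi t)
  rw [Set.preimage_add_const_Ioi, sub_self] at h2
  rw [h1, ← h2, ← integral_pow_mul_exp hlam, ← integral_mul_const]
  refine setIntegral_congr_fun measurableSet_Ioi fun x hx => ?_
  have hx : 0 < x := hx
  have : exp (-(lam * (x + t))) = exp (-(lam * x)) * exp (-lam * t) := by
    rw [← exp_add]; ring_nf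
  simp only [add_sub_cancel_right, max_eq_left hx.le, this]
  ring

lemma integral_mul_overshoot_pow {Ω : Type*} [MeasureSpace Ω]
    [IsProbabilityMeasure (ℙ : Measure Ω)] {lam : ℝ} (hlam : 0 < lam)
    {X T : Ω → ℝ} (hX : Measurable X) (hT : Measurable T) (hindep : IndepFun X T ℙ)
    (hXexp : Measure.map X ℙ = expMeasure lam) (hTpos : ∀ᵐ ω ∂ℙ, 0 ≤ T ω)
    {g : ℝ → ℝ} (hg : Measurable g) {n : ℕ} (hn : n ≠ 0)
    (hint : Integrable (fun ω => g (T ω) * max (X ω - T ω) 0 ^ n) ℙ) :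
    ∫ ω, g (T ω) * max (X ω - T ω) 0 ^ n ∂ℙ
      = n.factorial / lam ^ n * ∫ ω, g (T ω) * exp (-lam * T ω) ∂ℙ := by
  have : IsProbabilityMeasure (expMeasure lam) := isProbabilityMeasure_expMeasure hlam
  have : IsProbabilityMeasure (Measure.map T ℙ) :=
    Measure.isProbabilityMeasure_map hT.aemeasurable
  have hjoint : Measure.map (fun ω => (T ω, X ω)) ℙ = (Measure.map T ℙ).prod (expMeasure lam) := by
    rw [← hXexp]
    exact (indepFun_iff_map_prod_eq_prod_map_map hT.aemeasurable hX.aemeasurable).mp hindep.symm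
  have hF : Measurable (fun p : ℝ × ℝ => g p.1 * max (p.2 - p.1) 0 ^ n) := by fun_prop
  have hTX : AEMeasurable (fun ω => (T ω, X ω)) ℙ := (hT.prodMk hX).aemeasurable
  have hintF : Integrable (fun p : ℝ × ℝ => g p.1 * max (p.2 - p.1) 0 ^ n)
      ((Measure.map T ℙ).prod (expMeasure lam)) := by
    rw [← hjoint, integrable_map_measure hF.aestronglyMeasurable hTX]
    exact hint
  have h1 := integral_map hTX (f := fun p : ℝ × ℝ => g p.1 * max (p.2 - p.1) 0 ^ n)
    hF.aestronglyMeasurable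
  rw [← h1, hjoint, integral_prod _ hintF]
  simp_rw [integral_const_mul]
  have hpos : ∀ᵐ t ∂(Measure.map T ℙ), 0 ≤ t :=
    (ae_map_iff hT.aemeasurable measurableSet_Ici).mpr hTpos
  have h2 : ∀ᵐ t ∂(Measure.map T ℙ), g t * ∫ x, max (x - t) 0 ^ n ∂(expMeasure lam)
      = n.factorial / lam ^ n * (g t * exp (-lam * t)) := by
    filter_upwards [hpos] with t ht
    rw [integral_overshoot_pow hlam ht hn]
    ring
  have h3 : AEStronglyMeasurable (fun t => n.factorial / lam ^ n * (g t * exp (-lam * t)))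
      (Measure.map T ℙ) := Measurable.aestronglyMeasurable (by fun_prop)
  rw [integral_congr_ae h2, integral_map hT.aemeasurable h3, integral_const_mul]

/-- Corollary 1, M/D/1/M case: the average age upon decisions of an FCFS M/D/1/M
update-and-decide system (deterministic service time `1/μ`) is
`(ρ² + 2(1-ρ)(ρ + e^ρ - ρe^ρ))/(2λ(1-ρ))`. -/
theorem average_AuD_MD1M
    {Ω : Type*} [MeasureSpace Ω] [IsProbabilityMeasure (ℙ : Measure Ω)]
    (lam mu rho : ℝ) (hlam : 0 < lam) (hmu : 0 < mu)
    (hrho : rho = lam / mu) (hrho0 : 0 < rho) (hrho1 : rho < 1)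
    (X T : Ω → ℝ) (hX : Measurable X) (hT : Measurable T)
    (hindep : IndepFun X T ℙ)
    (hXexp : Measure.map X ℙ = expMeasure lam)
    (hTpos : ∀ᵐ ω ∂ℙ, 0 ≤ T ω)
    (hTint : Integrable T ℙ)
    (hTeint : Integrable (fun ω => T ω * exp (-lam * T ω)) ℙ)
    (hTlap : ∫ ω, exp (-lam * T ω) ∂ℙ = 1 - rho)
    (hTmean : ∫ ω, T ω ∂ℙ = 1 / mu + rho / (2 * mu * (1 - rho)))
    (hTe : ∫ ω, T ω * exp (-lam * T ω) ∂ℙ = (1 - rho) * (exp rho - 1) / lam)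
    (Y : Ω → ℝ) (hY : ∀ ω, Y ω = 1 / mu + max (X ω - T ω) 0) :
    ((∫ ω, Y ω ^ 2 ∂ℙ) + 2 * ∫ ω, T ω * Y ω ∂ℙ) / (2 * ∫ ω, Y ω ∂ℙ)
      = (rho ^ 2 + 2 * (1 - rho) * (rho + exp rho - rho * exp rho))
          / (2 * lam * (1 - rho)) := by
  have hXpow : ∀ n : ℕ, Integrable (fun ω => X ω ^ n) ℙ := by
    intro n
    have h := integrable_pow_expMeasure hlam n
    rw [← hXexp] at h
    exact h.comp_measurable hX
  have hX1 : Integrable X ℙ := by simpa using hXpow 1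
  -- Since `T ≥ 0` almost surely, the overshoot is dominated by `|X|`.
  have hle : ∀ᵐ ω ∂ℙ, max (X ω - T ω) 0 ≤ |X ω| := by
    filter_upwards [hTpos] with ω hω
    exact max_le (by linarith [le_abs_self (X ω)]) (abs_nonneg _)
  have hD1 : Integrable (fun ω => max (X ω - T ω) 0) ℙ := by
    refine hX1.mono (Measurable.aestronglyMeasurable (by fun_prop)) ?_
    filter_upwards [hle] with ω hω
    rwa [norm_eq_abs, norm_eq_abs, abs_of_nonneg (le_max_right _ _)]
  have hD2 : Integrable (fun ω => max (X ω - T ω) 0 ^ 2) ℙ := by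
    refine (hXpow 2).mono (Measurable.aestronglyMeasurable (by fun_prop)) ?_
    filter_upwards [hle] with ω hω
    rw [norm_pow, norm_pow, norm_eq_abs, norm_eq_abs, abs_of_nonneg (le_max_right _ _)]
    exact pow_le_pow_left₀ (le_max_right _ _) hω 2
  have hTD : Integrable (fun ω => T ω * max (X ω - T ω) 0) ℙ := by
    have hTX : Integrable (fun ω => T ω * X ω) ℙ := hindep.symm.integrable_mul hTint hX1
    refine hTX.mono (Measurable.aestronglyMeasurable (by fun_prop)) ?_
    filter_upwards [hle] with ω hω
    rw [norm_mul, norm_mul, norm_eq_abs (X ω), norm_eq_abs (max _ _),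
      abs_of_nonneg (le_max_right _ _)]
    exact mul_le_mul_of_nonneg_left hω (norm_nonneg _)
  have eD1 : ∫ ω, max (X ω - T ω) 0 ∂ℙ = (1 - rho) / lam := by
    have h := integral_mul_overshoot_pow hlam hX hT hindep hXexp hTpos (g := fun _ => 1)
      measurable_const one_ne_zero (by simpa using hD1)
    simp only [one_mul, pow_one, hTlap, Nat.factorial_one, Nat.cast_one] at h
    rw [h]; ring
  have eD2 : ∫ ω, max (X ω - T ω) 0 ^ 2 ∂ℙ = 2 * (1 - rho) / lam ^ 2 := by
    have h := integral_mul_overshoot_pow hlam hX hT hindep hXexp hTpos (g := fun _ => 1)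
      measurable_const two_ne_zero (by simpa using hD2)
    simp only [one_mul, hTlap, Nat.factorial_two, Nat.cast_ofNat] at h
    rw [h]; ring
  have eTD : ∫ ω, T ω * max (X ω - T ω) 0 ∂ℙ = (1 - rho) * (exp rho - 1) / lam ^ 2 := by
    have h := integral_mul_overshoot_pow hlam hX hT hindep hXexp hTpos (g := fun t => t)
      measurable_id one_ne_zero (by simpa using hTD)
    simp only [pow_one, hTe, Nat.factorial_one, Nat.cast_one] at h
    rw [h]; field_simp
  have eY : ∫ ω, Y ω ∂ℙ = 1 / mu + (1 - rho) / lam := by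
    simp_rw [hY]
    rw [integral_add (integrable_const _) hD1, eD1]
    simp
  have eY2 : ∫ ω, Y ω ^ 2 ∂ℙ
      = (1 / mu) ^ 2 + 2 * (1 / mu) * ((1 - rho) / lam) + 2 * (1 - rho) / lam ^ 2 := by
    simp_rw [hY, add_sq]
    have hlin : Integrable (fun ω => (1 / mu) ^ 2 + 2 * (1 / mu) * max (X ω - T ω) 0) ℙ :=
      (integrable_const _).add (hD1.const_mul _)
    rw [integral_add hlin hD2,
      integral_add (integrable_const _) (hD1.const_mul _), integral_const_mul, eD1, eD2]
    simp
  have eTY : ∫ ω, T ω * Y ω ∂ℙ = (1 / mu + rho / (2 * mu * (1 - rho))) * (1 / mu)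
      + (1 - rho) * (exp rho - 1) / lam ^ 2 := by
    simp_rw [hY, mul_add]
    rw [integral_add (hTint.mul_const _) hTD, integral_mul_const, hTmean, eTD]
  have h1r : 1 - rho ≠ 0 := by linarith
  have hmu' : 1 / mu = rho / lam := by rw [hrho]; field_simp
  have hrmu : rho / (2 * mu * (1 - rho)) = rho / (2 * (1 - rho)) * (1 / mu) := by
    field_simp
  have hEY : rho / lam + (1 - rho) / lam = 1 / lam := by ring
  rw [eY, eY2, eTY, hrmu, hmu', hEY]
  generalize exp rho = e
  field_simp
  ring
end

section
/- For all real λ > 0, μ > 0 with ρ = λ/μ ∈ (0,1), the following strict chain of inequalities holds: (ρ² + 2(1-ρ)(ρ + e^{ρ} - ρe^{ρ})) / (2λ(1-ρ)) < ρ(6ρ²e^{2ρ} - 13ρe^{2ρ} + 9e^{2ρ} + ρ - 3) / (3λ(1-ρ)(e^{2ρ}-1)) < (ρ³ - ρ² + 1) / (λ(1-ρ)). -/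
open Real

/-!
Put `E = exp ρ`. After removing the common factor `1 / (λ (1 - ρ))`, the middle age equals
`ρ (6ρ² - 13ρ + 9) / 3 + 2ρ (1 - ρ)² / (E² - 1)`.

Since `E² - 1 = 2 E sinh ρ`, its excess over the first age is
`ρ² / 6 - (1 - ρ)² E (1 - ρ / sinh ρ)`. Because `(1 - ρ) E ≤ 1`, positivity reduces to
`(1 - ρ) (sinh ρ - ρ) < sinh ρ * ρ² / 6`, which follows from a Taylor upper bound for `sinh`
(`one_sub_mul_sinh_sub_self_lt`).

The excess of the third age over the middle one is
`(1 - ρ)³ + ρ² / 3 - 2ρ (1 - ρ)² / (E² - 1)`; the cubic Taylor lower bound for `E² = exp (2ρ)`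
turns its positivity into that of the polynomial `ρ + 11ρ²/3 - 2ρ³`.
-/

lemma sinh_le_taylor {r : ℝ} (h0 : 0 < r) (h1 : r < 1) :
    sinh r ≤ r + r ^ 3 / 6 + 5 * r ^ 4 / 192 := by
  have hE := Real.exp_bound' h0.le h1.le (n := 4) (by norm_num)
  have hF : 1 - r + r ^ 2 / 2 - r ^ 3 / 6 ≤ exp (-r) := by
    -- `Real.exp_bound` at order 5: the remainder at `-r`, at most `r ^ 5 / 100`, is absorbed by
    -- the dropped positive term `r ^ 4 / 24`.
    have h := Real.exp_bound (x := -r) (by rw [abs_neg, abs_of_pos h0]; exact h1.le)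
      (n := 5) (by norm_num)
    rw [abs_neg, abs_of_pos h0] at h
    have h' := (abs_le.mp h).1
    norm_num [Finset.sum_range_succ, Nat.factorial] at h'
    have : r ^ 5 ≤ r ^ 4 := pow_le_pow_of_le_one h0.le h1.le (by norm_num)
    have : 0 < r ^ 4 := by positivity
    nlinarith
  norm_num [Finset.sum_range_succ, Nat.factorial] at hE
  rw [sinh_eq]
  nlinarith

lemma one_sub_mul_sinh_sub_self_lt {r : ℝ} (h0 : 0 < r) (h1 : r < 1) :
    (1 - r) * (sinh r - r) < sinh r * (r ^ 2 / 6) := by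
  have hs := sinh_le_taylor h0 h1
  have hs0 : r < sinh r := self_lt_sinh_iff.mpr h0
  rcases le_total (1 - r - r ^ 2 / 6) 0 with hc | hc
  · nlinarith [mul_pos h0 (sub_pos.mpr h1), mul_nonneg (neg_nonneg.mpr hc) (h0.trans hs0).le]
  · have h := mul_le_mul_of_nonneg_right hs hc
    have hp : (r + r ^ 3 / 6 + 5 * r ^ 4 / 192) * (1 - r - r ^ 2 / 6) < r * (1 - r) := by
      have e : r * (1 - r) - (r + r ^ 3 / 6 + 5 * r ^ 4 / 192) * (1 - r - r ^ 2 / 6)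
          = r ^ 4 * (27 / 192 + r / 36 + 5 * r / 192 + 5 * r ^ 2 / 1152) := by ring
      have : 0 < r ^ 4 * (27 / 192 + r / 36 + 5 * r / 192 + 5 * r ^ 2 / 1152) := by positivity
      linarith
    nlinarith

/-- The first inequality with denominators cleared: the factor `2 * exp r` from
`exp r ^ 2 - 1 = 2 * exp r * sinh r` cancels, and `(1 - r) * exp r ≤ 1` removes the rest. -/
lemma one_sub_sq_mul_exp_lt {r : ℝ} (h0 : 0 < r) (h1 : r < 1) :
    (1 - r) ^ 2 * exp r * (exp r ^ 2 - 1 - 2 * r * exp r)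
      < r ^ 2 / 6 * (exp r ^ 2 - 1) := by
  have hE : 0 < exp r := exp_pos r
  have hb : (1 - r) * exp r ≤ 1 := by
    have h := mul_le_mul_of_nonneg_right (one_sub_le_exp_neg r) hE.le
    rwa [← exp_add, neg_add_cancel, exp_zero] at h
  have hD : exp r ^ 2 - 1 = 2 * exp r * sinh r := by
    rw [sinh_eq, exp_neg]
    field_simp
  have hs0 : r < sinh r := self_lt_sinh_iff.mpr h0
  have hk : (1 - r) ^ 2 * exp r * (sinh r - r) < sinh r * (r ^ 2 / 6) := by
    have h := mul_le_mul_of_nonneg_right hb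
      (mul_nonneg (sub_pos.mpr h1).le (sub_pos.mpr hs0).le)
    have := one_sub_mul_sinh_sub_self_lt h0 h1
    nlinarith
  rw [hD]
  have := mul_lt_mul_of_pos_left hk (show 0 < 2 * exp r by positivity)
  nlinarith

/-- The second inequality with denominators cleared. -/
lemma two_mul_one_sub_sq_lt {r : ℝ} (h0 : 0 < r) (h1 : r < 1) :
    2 * r * (1 - r) ^ 2 < ((1 - r) ^ 3 + r ^ 2 / 3) * (exp r ^ 2 - 1) := by
  have hE : 2 * r + 2 * r ^ 2 + 4 * r ^ 3 / 3 ≤ exp r ^ 2 - 1 := by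
    have h := Real.sum_le_exp_of_nonneg (x := 2 * r) (by positivity) 4
    norm_num [Finset.sum_range_succ, Nat.factorial] at h
    rw [← exp_nat_mul]
    push_cast
    nlinarith
  have hc : 0 < (1 - r) ^ 3 + r ^ 2 / 3 := by
    have := pow_pos (sub_pos.mpr h1) 3
    positivity
  have h := mul_le_mul_of_nonneg_left hE hc.le
  have e : ((1 - r) ^ 3 + r ^ 2 / 3) * (2 * r + 2 * r ^ 2 + 4 * r ^ 3 / 3)
      - 2 * r * (1 - r) ^ 2 = 2 * r ^ 4 / 3 * (1 + 5 * r / 3 + 2 * r * (1 - r)) := by ring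
  have : 0 < 2 * r ^ 4 / 3 * (1 + 5 * r / 3 + 2 * r * (1 - r)) := by
    have := sub_pos.mpr h1
    positivity
  linarith

/-- Theorem 2: the average ages upon decisions of the M/D/1/M, M/U/1/M and M/M/1/M
update-and-decide systems satisfy `Δ_D^{M/D/1/M} < Δ_D^{M/U/1/M} < Δ_D^{M/M/1/M}`. -/
theorem AuD_ordering_MG1M
    (lam mu rho : ℝ) (hlam : 0 < lam) (hmu : 0 < mu)
    (hrho : rho = lam / mu) (hrho0 : 0 < rho) (hrho1 : rho < 1) :
    (rho ^ 2 + 2 * (1 - rho) * (rho + exp rho - rho * exp rho))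
        / (2 * lam * (1 - rho))
      < rho * (6 * rho ^ 2 * exp (2 * rho) - 13 * rho * exp (2 * rho)
          + 9 * exp (2 * rho) + rho - 3)
        / (3 * lam * (1 - rho) * (exp (2 * rho) - 1))
    ∧ rho * (6 * rho ^ 2 * exp (2 * rho) - 13 * rho * exp (2 * rho)
          + 9 * exp (2 * rho) + rho - 3)
        / (3 * lam * (1 - rho) * (exp (2 * rho) - 1))
      < (rho ^ 3 - rho ^ 2 + 1) / (lam * (1 - rho)) := by
  have hr : 0 < 1 - rho := sub_pos.mpr hrho1
  have hE2 : exp (2 * rho) = exp rho ^ 2 := by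
    rw [← exp_nat_mul]
    norm_num
  have h1E : 1 < exp rho := one_lt_exp_iff.mpr hrho0
  have hD : 0 < exp rho ^ 2 - 1 := by nlinarith
  have A := one_sub_sq_mul_exp_lt hrho0 hrho1
  have B := two_mul_one_sub_sq_lt hrho0 hrho1
  rw [hE2]
  generalize exp rho = E at *
  constructor
  · rw [← sub_pos]
    have e : rho * (6 * rho ^ 2 * E ^ 2 - 13 * rho * E ^ 2 + 9 * E ^ 2 + rho - 3)
          / (3 * lam * (1 - rho) * (E ^ 2 - 1))
        - (rho ^ 2 + 2 * (1 - rho) * (rho + E - rho * E)) / (2 * lam * (1 - rho))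
        = (rho ^ 2 / 6 * (E ^ 2 - 1) - (1 - rho) ^ 2 * E * (E ^ 2 - 1 - 2 * rho * E))
          / (lam * (1 - rho) * (E ^ 2 - 1)) := by
      have := hD.ne'
      have := hr.ne'
      field_simp
      ring
    rw [e]
    exact div_pos (sub_pos.mpr A) (by positivity)
  · rw [← sub_pos]
    have e : (rho ^ 3 - rho ^ 2 + 1) / (lam * (1 - rho))
        - rho * (6 * rho ^ 2 * E ^ 2 - 13 * rho * E ^ 2 + 9 * E ^ 2 + rho - 3)
          / (3 * lam * (1 - rho) * (E ^ 2 - 1))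
        = (((1 - rho) ^ 3 + rho ^ 2 / 3) * (E ^ 2 - 1) - 2 * rho * (1 - rho) ^ 2)
          / (lam * (1 - rho) * (E ^ 2 - 1)) := by
      have := hD.ne'
      have := hr.ne'
      field_simp
      ring
    rw [e]
    exact div_pos (sub_pos.mpr B) (by positivity)
end

section
/- For all real μ > 0, ρ ∈ (0,1), and m ≥ 1, the quantity e^{ρ}(1-ρ)(2ρe^{ρ} - e^{2ρ} + 1)/(μρ(e^{2ρ}-1)) + ρ(2m²+1)/(12m²μ) + 1/(2mμ(1-ρ)) is strictly positive. -/
/-!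
Dividing the numerator and the denominator of the first summand by `exp ρ` turns it into
`-(1 - ρ) * exp ρ * (1 / ρ - 1 / sinh ρ) / μ`. Here `(1 - ρ) * exp ρ ≤ 1` since `1 - ρ ≤ exp (-ρ)`,
and `1 / ρ - 1 / sinh ρ ≤ ρ / 6` by the Taylor estimate `sinh_bound`. So the first summand is at
least `-ρ / (6 μ)`, while the second equals `ρ / (6 μ) + ρ / (12 m² μ)` and the third is positive.
-/

open Real

/-- The cleared form of `1 / x - 1 / sinh x ≤ x / 6`, from the fifth-order Taylor bound
`sinh x ≤ x + x ^ 3 / 6 + x ^ 5 / 100`. -/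
lemma sinh_bound (x : ℝ) (h0 : 0 < x) (h1 : x < 1) : sinh x - x ≤ x ^ 2 * sinh x / 6 := by
  have ha : |x| = x := abs_of_pos h0
  have e1 := Real.exp_bound (x := x) (by rw [ha]; exact h1.le) (n := 5) (by norm_num)
  have e2 := Real.exp_bound (x := -x) (by rw [abs_neg, ha]; exact h1.le) (n := 5) (by norm_num)
  rw [abs_neg] at e2
  rw [ha, abs_le] at e1 e2
  norm_num [Finset.sum_range_succ, Nat.factorial] at e1 e2
  have hs : sinh x ≤ x + x ^ 3 / 6 + x ^ 5 / 100 := by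
    rw [Real.sinh_eq]
    nlinarith [e1.2, e2.1]
  have hx2 : x ^ 2 ≤ 1 := by nlinarith
  have h5 : 0 < x ^ 5 := by positivity
  have h7 : 0 < x ^ 7 := by positivity
  have := mul_le_mul_of_nonneg_left hs (by linarith : 0 ≤ 6 - x ^ 2)
  nlinarith

/-- The first summand, up to the factor `1 / μ`, in terms of `sinh`. -/
lemma first_term_eq (x : ℝ) (h0 : 0 < x) :
    exp x * (1 - x) * (2 * x * exp x - exp (2 * x) + 1) / (x * (exp (2 * x) - 1))
      = -((1 - x) * exp x * ((sinh x - x) / (x * sinh x))) := by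
  have hE : 1 < exp x := Real.one_lt_exp_iff.mpr h0
  have hd : exp x ^ 2 - 1 ≠ 0 := by nlinarith
  have hs : sinh x = (exp x ^ 2 - 1) / (2 * exp x) := by
    rw [Real.sinh_eq, Real.exp_neg]
    field_simp
  have h2 : exp (2 * x) = exp x ^ 2 := by rw [two_mul, Real.exp_add, sq]
  rw [hs, h2]
  have := Real.exp_pos x
  field_simp
  ring

/-- Key inequality in the proof of Proposition 3: the difference
`f₂(m) = Δ_D^{M/U/1/D} - Δ_D^{M/D/1/D}` is strictly positive for all `μ > 0`, `ρ ∈ (0,1)`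
and `m ≥ 1`. -/
theorem MU1D_minus_MD1D_pos
    (mu rho m : ℝ) (hmu : 0 < mu) (hrho0 : 0 < rho) (hrho1 : rho < 1) (hm : 1 ≤ m) :
    0 < exp rho * (1 - rho) * (2 * rho * exp rho - exp (2 * rho) + 1)
          / (mu * rho * (exp (2 * rho) - 1))
        + rho * (2 * m ^ 2 + 1) / (12 * m ^ 2 * mu)
        + 1 / (2 * m * mu * (1 - rho)) := by
  have hm0 : 0 < m := by linarith
  have h1r : 0 < 1 - rho := by linarith
  have hs : rho < sinh rho := Real.self_lt_sinh_iff.mpr hrho0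
  have hs0 : 0 < sinh rho := hrho0.trans hs
  have hE : (1 - rho) * exp rho ≤ 1 := by
    have h := mul_le_mul_of_nonneg_right (Real.one_sub_le_exp_neg rho) (Real.exp_pos rho).le
    rwa [← Real.exp_add, neg_add_cancel, Real.exp_zero] at h
  have hq : (sinh rho - rho) / (rho * sinh rho) ≤ rho / 6 := by
    rw [div_le_iff₀ (by positivity)]
    linarith [sinh_bound rho hrho0 hrho1]
  have hq0 : 0 ≤ (sinh rho - rho) / (rho * sinh rho) :=
    div_nonneg (by linarith) (by positivity)
  have hfirst : -(rho / 6) / mu ≤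
      exp rho * (1 - rho) * (2 * rho * exp rho - exp (2 * rho) + 1)
          / (mu * rho * (exp (2 * rho) - 1)) := by
    rw [mul_assoc mu, mul_comm mu, ← div_div, first_term_eq rho hrho0]
    gcongr
    linarith [mul_le_mul_of_nonneg_right hE hq0]
  have hsecond : rho * (2 * m ^ 2 + 1) / (12 * m ^ 2 * mu)
      = rho / 6 / mu + rho / (12 * m ^ 2 * mu) := by
    field_simp
    ring
  have hp : 0 < rho / (12 * m ^ 2 * mu) := by positivity
  have ht : 0 < 1 / (2 * m * mu * (1 - rho)) := by positivity
  rw [hsecond]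
  rw [neg_div] at hfirst
  linarith
end

section
/- Let μ > 0 and ρ ∈ (0,1), and set λ = ρμ. For m > 0 define D(m) = (2ρ² - 3ρ + 2)/(μ(1-ρ)) + ρ(1 + e^{-1/m})/(2μm(1 - e^{-1/m})) + (1-ρ)(1 + e^{-ρ/m})/(2μm(1 - e^{-ρ/m})). Then D is strictly decreasing on (0,∞), D(m) > (ρ³ - ρ² + 1)/(λ(1-ρ)) for every m > 0, and D(m) tends to (ρ³ - ρ² + 1)/(λ(1-ρ)) as m → ∞. -/
/-!
The whole argument rests on the function `g t = t * cosh t / sinh t = t coth t`. Since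
`(1 + e^{-2t}) / (1 - e^{-2t}) = coth t`, the age is
`D m = A + (ρ/μ) g(1/(2m)) + ((1-ρ)/(μρ)) g(ρ/(2m))` for every `m > 0`, with `A` constant in `m`.
The derivative of `g` is `(sinh t cosh t - t) / sinh² t`, positive for `t > 0` because
`t < sinh t` and `1 < cosh t`; so `g` is strictly increasing on `(0, ∞)` (`tcoth_strictMonoOn`),
while `g t → 1` as `t → 0` (`tcoth_tendsto`). Hence `D` is strictly decreasing with limit
`A + ρ/μ + (1-ρ)/(μρ)`, which is the Poisson-decision value, and a strictly decreasing function
stays strictly above its limit at infinity.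
-/


open Real Filter

/-- The function `t coth t`. Its value at `0` is the junk value `0` rather than the limit `1`. -/
noncomputable def tcoth (t : ℝ) : ℝ := t * cosh t / sinh t

lemma tcoth_strictMonoOn : StrictMonoOn tcoth (Set.Ioi 0) := by
  have hd : ∀ t ∈ Set.Ioi (0 : ℝ), HasDerivAt tcoth
      (((1 * cosh t + t * sinh t) * sinh t - t * cosh t * cosh t) / sinh t ^ 2) t := by
    intro t ht
    have hs : sinh t ≠ 0 := (sinh_pos_iff.2 ht).ne'
    exact ((hasDerivAt_id t).mul (hasDerivAt_cosh t)).div (hasDerivAt_sinh t) hs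
  refine strictMonoOn_of_deriv_pos (convex_Ioi 0)
    (fun t ht => (hd t ht).continuousAt.continuousWithinAt) ?_
  intro t ht
  rw [interior_Ioi] at ht
  rw [(hd t ht).deriv]
  have hs : 0 < sinh t := sinh_pos_iff.2 ht
  have hts : t < sinh t := self_lt_sinh_iff.2 ht
  have hc : 1 < cosh t := one_lt_cosh.2 (ne_of_gt ht)
  have hsq := cosh_sq t
  refine div_pos ?_ (by positivity)
  have hnum : (1 * cosh t + t * sinh t) * sinh t - t * cosh t * cosh t
      = sinh t * cosh t - t := by
    linear_combination (-t) * hsq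
  rw [hnum]
  nlinarith

lemma tcoth_tendsto : Tendsto tcoth (nhdsWithin 0 (Set.Ioi 0)) (nhds 1) := by
  -- `sinh t / t → 1` is the derivative of `sinh` at `0`.
  have h1 : Tendsto (fun t : ℝ => t⁻¹ * sinh t) (nhdsWithin 0 (Set.Ioi 0)) (nhds 1) := by
    have h := (hasDerivAt_iff_tendsto_slope_zero.1 (hasDerivAt_sinh 0)).mono_left
      (nhdsWithin_mono 0 (fun t (ht : t ∈ Set.Ioi (0 : ℝ)) => ne_of_gt ht))
    simpa using h
  have h2 : Tendsto cosh (nhdsWithin 0 (Set.Ioi 0)) (nhds 1) := by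
    have h := (continuous_cosh.tendsto 0).mono_left
      (nhdsWithin_le_nhds (s := Set.Ioi (0 : ℝ)))
    simpa using h
  have h3 := h2.div h1 one_ne_zero
  rw [div_one] at h3
  refine h3.congr' ?_
  filter_upwards [self_mem_nhdsWithin] with t ht
  have ht0 : t ≠ 0 := ne_of_gt ht
  have hs : sinh t ≠ 0 := (sinh_pos_iff.2 ht).ne'
  simp only [Pi.div_apply, tcoth]
  field_simp

lemma one_add_exp_div (c m : ℝ) (hc : 0 < c) (hm : 0 < m) :
    (1 + exp (-c / m)) / (m * (1 - exp (-c / m))) = 2 / c * tcoth (c / (2 * m)) := by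
  have ht : 0 < c / (2 * m) := by positivity
  have hct : c = 2 * m * (c / (2 * m)) := by field_simp
  have hexp : -c / m = -(c / (2 * m)) + -(c / (2 * m)) := by field_simp; ring
  rw [hexp]
  set t := c / (2 * m)
  have hlt : exp (-t) < 1 := by
    rw [← exp_zero]; exact exp_lt_exp.2 (by linarith)
  have hprod : exp t * exp (-t) = 1 := by rw [← exp_add]; simp
  have hpos := exp_pos (-t)
  have h1 : 1 - exp (-t) * exp (-t) ≠ 0 := by nlinarith
  have h2 : exp t - exp (-t) ≠ 0 := by
    have : exp (-t) < exp t := exp_lt_exp.2 (by linarith)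
    linarith
  have key : (1 + exp (-t) * exp (-t)) / (1 - exp (-t) * exp (-t))
      = (exp t + exp (-t)) / (exp t - exp (-t)) := by
    rw [div_eq_div_iff h1 h2]
    linear_combination (2 * exp (-t)) * hprod
  have hright : 2 / c * tcoth t = 1 / m * ((exp t + exp (-t)) / (exp t - exp (-t))) := by
    rw [hct, tcoth, cosh_eq, sinh_eq]
    field_simp
  rw [hright, ← key, exp_add, div_mul_div_comm, one_mul]

lemma tendsto_tcoth_div (c : ℝ) (hc : 0 < c) :
    Tendsto (fun m : ℝ => tcoth (c / (2 * m))) atTop (nhds 1) := by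
  refine tcoth_tendsto.comp (tendsto_nhdsWithin_iff.2 ⟨?_, ?_⟩)
  · exact tendsto_const_nhds.div_atTop (tendsto_id.const_mul_atTop two_pos)
  · filter_upwards [eventually_gt_atTop 0] with m hm
    exact div_pos hc (by linarith)

lemma tcoth_div_lt (c : ℝ) (hc : 0 < c) {a b : ℝ} (ha : 0 < a) (hab : a < b) :
    tcoth (c / (2 * b)) < tcoth (c / (2 * a)) := by
  have hb : 0 < b := ha.trans hab
  refine tcoth_strictMonoOn (Set.mem_Ioi.2 (by positivity)) (Set.mem_Ioi.2 (by positivity)) ?_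
  gcongr

/-- Proposition 2, M/M case: the average age upon decisions `Δ_D^{M/M/1/D}` of an M/M/1/D
update-and-decide system with decision rate `ν = mμ` is strictly decreasing in `m`, always
exceeds the Poisson-decision value `Δ_D^{M/M/1/M} = (ρ³-ρ²+1)/(λ(1-ρ))`, and tends to it
as `m → ∞`. -/
theorem MM1D_AuD_decreasing_to_MM1M
    (mu rho lam : ℝ) (hmu : 0 < mu) (hrho0 : 0 < rho) (hrho1 : rho < 1)
    (hlam : lam = rho * mu)
    (D : ℝ → ℝ)
    (hD : ∀ m : ℝ, D m = (2 * rho ^ 2 - 3 * rho + 2) / (mu * (1 - rho))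
        + rho * (1 + exp (-1 / m)) / (2 * mu * m * (1 - exp (-1 / m)))
        + (1 - rho) * (1 + exp (-rho / m)) / (2 * mu * m * (1 - exp (-rho / m)))) :
    StrictAntiOn D (Set.Ioi 0)
    ∧ (∀ m : ℝ, 0 < m → (rho ^ 3 - rho ^ 2 + 1) / (lam * (1 - rho)) < D m)
    ∧ Tendsto D atTop (nhds ((rho ^ 3 - rho ^ 2 + 1) / (lam * (1 - rho)))) := by
  have h1r : 0 < 1 - rho := by linarith
  have hD' : ∀ m : ℝ, 0 < m → D m = (2 * rho ^ 2 - 3 * rho + 2) / (mu * (1 - rho))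
      + rho / mu * tcoth (1 / (2 * m)) + (1 - rho) / (mu * rho) * tcoth (rho / (2 * m)) := by
    intro m hm
    have e1 := one_add_exp_div 1 m one_pos hm
    have e2 := one_add_exp_div rho m hrho0 hm
    have s1 : rho * (1 + exp (-1 / m)) / (2 * mu * m * (1 - exp (-1 / m)))
        = rho / (2 * mu) * ((1 + exp (-1 / m)) / (m * (1 - exp (-1 / m)))) := by
      rw [div_mul_div_comm]; ring_nf
    have s2 : (1 - rho) * (1 + exp (-rho / m)) / (2 * mu * m * (1 - exp (-rho / m)))
        = (1 - rho) / (2 * mu) * ((1 + exp (-rho / m)) / (m * (1 - exp (-rho / m)))) := by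
      rw [div_mul_div_comm]; ring_nf
    rw [hD, s1, s2, e1, e2]
    field_simp
  have hanti : StrictAntiOn D (Set.Ioi 0) := by
    intro a ha b hb hab
    rw [hD' a ha, hD' b hb]
    have i1 := tcoth_div_lt 1 one_pos ha hab
    have i2 := tcoth_div_lt rho hrho0 ha hab
    gcongr
  have hlim : Tendsto D atTop (nhds ((rho ^ 3 - rho ^ 2 + 1) / (lam * (1 - rho)))) := by
    have h := (((tendsto_tcoth_div 1 one_pos).const_mul (rho / mu)).const_add
      ((2 * rho ^ 2 - 3 * rho + 2) / (mu * (1 - rho)))).add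
      ((tendsto_tcoth_div rho hrho0).const_mul ((1 - rho) / (mu * rho)))
    have hval : (2 * rho ^ 2 - 3 * rho + 2) / (mu * (1 - rho)) + rho / mu * 1
        + (1 - rho) / (mu * rho) * 1 = (rho ^ 3 - rho ^ 2 + 1) / (lam * (1 - rho)) := by
      rw [hlam]
      have := h1r.ne'
      field_simp
      ring
    rw [hval] at h
    refine h.congr' ?_
    filter_upwards [eventually_gt_atTop 0] with m hm
    exact (hD' m hm).symm
  refine ⟨hanti, fun m hm => ?_, hlim⟩
  have hm1 : (0 : ℝ) < m + 1 := by linarith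
  -- The limit is at most `D (m + 1)`, which is strictly below `D m`.
  refine lt_of_le_of_lt (le_of_tendsto hlim ?_) (hanti hm hm1 (by linarith))
  filter_upwards [eventually_ge_atTop (m + 1)] with x hx
  exact hanti.antitoneOn hm1 (Set.mem_Ioi.2 (by linarith)) hx
end

section
/- Let μ > 0 and ρ ∈ (0,1), and set λ = ρμ. For m > 0 define D(m) = e^{ρ}(1-ρ)/(μρ) + (1-ρ)(1 + e^{-ρ/m})/(2μm(1 - e^{-ρ/m})) + (-3ρ² + 6ρ - 2)/(2μρ(1-ρ)). Then D is strictly decreasing on (0,∞), D(m) > (ρ² + 2(1-ρ)(ρ + e^{ρ} - ρe^{ρ}))/(2λ(1-ρ)) for every m > 0, and D(m) tends to (ρ² + 2(1-ρ)(ρ + e^{ρ} - ρe^{ρ}))/(2λ(1-ρ)) as m → ∞. -/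
/-!
Put `x = rho / m` and `g x = x (1 + e^{-x}) / (1 - e^{-x})` (which is `x coth (x / 2)`). Then `D m`
is `L + (1 - rho) / (2 mu rho) * (g x - 2)`, where `L` is the Poisson-decision value, so everything
reduces to two facts on `g`: it is strictly increasing on `(0, ∞)` (`strictMonoOn_xCoth`), because
its derivative has the sign of `sinh x - x`, and it tends to `2` at `0⁺` (`tendsto_xCoth`), because
`1 - e^{-x}` has derivative `1` at `0`. The strict lower bound `L < D m` follows from strict
monotonicity and the limit.
-/

open Real Filter

/-- The function `x coth (x / 2)` on `x > 0`, written with `exp (-x)`. -/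
noncomputable def xCoth (x : ℝ) : ℝ := x * (1 + exp (-x)) / (1 - exp (-x))

theorem strictMonoOn_xCoth : StrictMonoOn xCoth (Set.Ioi 0) := by
  have hder : ∀ x : ℝ, 0 < x → HasDerivAt xCoth
      (((1 + exp (-x) + x * (-exp (-x))) * (1 - exp (-x))
        - x * (1 + exp (-x)) * exp (-x)) / (1 - exp (-x)) ^ 2) x := by
    intro x hx
    have hlt : exp (-x) < 1 := Real.exp_lt_one_iff.2 (by linarith)
    have he : HasDerivAt (fun y : ℝ => exp (-y)) (-exp (-x)) x := by
      simpa using (hasDerivAt_neg x).exp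
    have hnum : HasDerivAt (fun y : ℝ => y * (1 + exp (-y)))
        (1 + exp (-x) + x * (-exp (-x))) x := by
      simpa only [id, one_mul] using (hasDerivAt_id' x).fun_mul (he.const_add 1)
    have hden : HasDerivAt (fun y : ℝ => 1 - exp (-y)) (exp (-x)) x := by
      simpa using he.const_sub 1
    exact hnum.div hden (by linarith)
  refine strictMonoOn_of_deriv_pos (convex_Ioi 0)
    (fun x hx => (hder x hx).continuousAt.continuousWithinAt) ?_
  intro x hx
  rw [interior_Ioi] at hx
  have hx0 : 0 < x := hx
  rw [(hder x hx0).deriv]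
  have hlt : exp (-x) < 1 := Real.exp_lt_one_iff.2 (by linarith)
  have hsinh : x < sinh x := self_lt_sinh_iff.2 hx0
  rw [sinh_eq] at hsinh
  have hprod : exp x * exp (-x) = 1 := by rw [← exp_add]; simp
  have hpos := exp_pos (-x)
  -- The numerator is `2 * exp (-x) * (sinh x - x)`.
  have hkey : 0 < exp (-x) * ((exp x - exp (-x)) / 2 - x) := mul_pos hpos (by linarith)
  refine div_pos ?_ (pow_pos (by linarith) 2)
  nlinarith

theorem tendsto_xCoth : Tendsto xCoth (nhdsWithin 0 (Set.Ioi 0)) (nhds 2) := by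
  have hden : HasDerivAt (fun y : ℝ => 1 - exp (-y)) 1 0 := by
    simpa using ((hasDerivAt_neg (0 : ℝ)).exp).const_sub 1
  have hslope := (hasDerivAt_iff_tendsto_slope_zero.1 hden).mono_left
    (nhdsWithin_mono (0 : ℝ) (fun x (hx : 0 < x) => hx.ne'))
  have hnum : Tendsto (fun y : ℝ => 1 + exp (-y)) (nhdsWithin 0 (Set.Ioi 0)) (nhds 2) := by
    have hc : Continuous (fun y : ℝ => 1 + exp (-y)) := by fun_prop
    have h0 := hc.tendsto 0
    norm_num at h0
    exact h0.mono_left nhdsWithin_le_nhds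
  have hdiv := hnum.div hslope one_ne_zero
  rw [div_one] at hdiv
  refine hdiv.congr' ?_
  filter_upwards [self_mem_nhdsWithin] with x hx
  have hx0 : 0 < x := hx
  have hlt : exp (-x) < 1 := Real.exp_lt_one_iff.2 (by linarith)
  have hne : 1 - exp (-x) ≠ 0 := by linarith
  simp only [Pi.div_apply, xCoth, zero_add, neg_zero, exp_zero, sub_self, sub_zero, smul_eq_mul]
  field_simp

/-- Proposition 2, M/D case: the average age upon decisions `Δ_D^{M/D/1/D}` of an M/D/1/D
update-and-decide system with decision rate `ν = mμ` is strictly decreasing in `m`, always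
exceeds the Poisson-decision value `Δ_D^{M/D/1/M}`, and tends to it as `m → ∞`. -/
theorem MD1D_AuD_decreasing_to_MD1M
    (mu rho lam : ℝ) (hmu : 0 < mu) (hrho0 : 0 < rho) (hrho1 : rho < 1)
    (hlam : lam = rho * mu)
    (D : ℝ → ℝ)
    (hD : ∀ m : ℝ, D m = exp rho * (1 - rho) / (mu * rho)
        + (1 - rho) * (1 + exp (-rho / m)) / (2 * mu * m * (1 - exp (-rho / m)))
        + (-3 * rho ^ 2 + 6 * rho - 2) / (2 * mu * rho * (1 - rho))) :
    StrictAntiOn D (Set.Ioi 0)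
    ∧ (∀ m : ℝ, 0 < m →
        (rho ^ 2 + 2 * (1 - rho) * (rho + exp rho - rho * exp rho))
          / (2 * lam * (1 - rho)) < D m)
    ∧ Tendsto D atTop
        (nhds ((rho ^ 2 + 2 * (1 - rho) * (rho + exp rho - rho * exp rho))
          / (2 * lam * (1 - rho)))) := by
  subst hlam
  set L := (rho ^ 2 + 2 * (1 - rho) * (rho + exp rho - rho * exp rho))
    / (2 * (rho * mu) * (1 - rho)) with hL
  have hr : (1 - rho) ≠ 0 := by linarith
  have hc : 0 < (1 - rho) / (2 * mu * rho) := div_pos (by linarith) (by positivity)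
  have hDg : ∀ m : ℝ, 0 < m →
      D m = L + (1 - rho) / (2 * mu * rho) * (xCoth (rho / m) - 2) := by
    intro m hm
    have hlt : exp (-(rho / m)) < 1 := Real.exp_lt_one_iff.2 (by have := div_pos hrho0 hm; linarith)
    rw [hD, hL, xCoth, neg_div]
    generalize exp (-(rho / m)) = t at *
    have hne : 1 - t ≠ 0 := by linarith
    field_simp
    ring
  have hanti : StrictAntiOn D (Set.Ioi 0) := by
    intro a ha b hb hab
    have ha0 : 0 < a := ha
    have hb0 : 0 < b := hb
    have hg : xCoth (rho / b) < xCoth (rho / a) :=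
      strictMonoOn_xCoth (div_pos hrho0 hb0) (div_pos hrho0 ha0)
        (div_lt_div_of_pos_left hrho0 ha0 hab)
    rw [hDg a ha0, hDg b hb0]
    have := mul_lt_mul_of_pos_left hg hc
    linarith
  have hlim : Tendsto D atTop (nhds L) := by
    have hx : Tendsto (fun m : ℝ => rho / m) atTop (nhdsWithin 0 (Set.Ioi 0)) := by
      refine tendsto_nhdsWithin_iff.2 ⟨tendsto_const_nhds.div_atTop tendsto_id, ?_⟩
      filter_upwards [eventually_gt_atTop 0] with m hm using div_pos hrho0 hm
    have h := (((tendsto_xCoth.comp hx).sub_const 2).const_mul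
      ((1 - rho) / (2 * mu * rho))).const_add L
    simp only [sub_self, mul_zero, add_zero] at h
    refine h.congr' ?_
    filter_upwards [eventually_gt_atTop 0] with m hm using (hDg m hm).symm
  refine ⟨hanti, fun m hm => ?_, hlim⟩
  -- Comparing with `D (m + 1)` turns the weak bound coming from the limit into a strict one.
  have hm1 : 0 < m + 1 := by linarith
  have hle : L ≤ D (m + 1) := by
    refine le_of_tendsto hlim ?_
    filter_upwards [eventually_ge_atTop (m + 1)] with y hy
    exact hanti.antitoneOn hm1 (lt_of_lt_of_le hm1 hy) hy
  exact hle.trans_lt (hanti hm hm1 (by linarith))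
end

section
/- Let ρ ∈ (0,1). For m > 0 define p(m) = 1/2 - m(1 - e^{-ρ/m})/(2ρ). Then 0 < p(m) < 1/2 for every m > 0, p is strictly decreasing on (0,∞), and p(m) tends to 0 as m → ∞. -/
/-! With `x = -ρ/m < 0` the missing probability is `(1 - (e^x - 1)/x) / 2`, where `(e^x - 1)/x` is
the slope of the secant of `exp` between `0` and `x`. The bounds follow from `1 + x < e^x < 1`,
the monotonicity from the strict convexity of `exp` (secant slopes through `0` increase strictly
with `x`, and `x` increases with `m`), and the limit from `deriv exp 0 = 1`, since `x → 0` as `m → ∞`. -/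

open Real Filter

/-- Proposition 4, M/M/1/D case: the missing probability `p(m) = 1/2 - m(1-e^{-ρ/m})/(2ρ)`
of an M/M/1/D update-and-decide system with decision rate `ν = mμ` lies in `(0, 1/2)`, is
strictly decreasing in `m`, and vanishes as `m → ∞`. -/
theorem MM1D_missing_probability
    (rho : ℝ) (hrho0 : 0 < rho) (hrho1 : rho < 1)
    (p : ℝ → ℝ)
    (hp : ∀ m : ℝ, p m = 1 / 2 - m * (1 - exp (-rho / m)) / (2 * rho)) :
    (∀ m : ℝ, 0 < m → 0 < p m ∧ p m < 1 / 2)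
    ∧ StrictAntiOn p (Set.Ioi 0)
    ∧ Tendsto p atTop (nhds 0) := by
  have key : ∀ m : ℝ, 0 < m →
      p m = (1 - (exp (-rho / m) - exp 0) / (-rho / m - 0)) / 2 := by
    intro m hm
    rw [hp, exp_zero, sub_zero]
    generalize exp (-rho / m) = e
    field_simp
    ring
  have hneg : ∀ m : ℝ, 0 < m → -rho / m < 0 := fun m hm =>
    div_neg_of_neg_of_pos (neg_lt_zero.mpr hrho0) hm
  refine ⟨fun m hm => ?_, fun a ha b hb hab => ?_, ?_⟩
  · have hx := hneg m hm
    have h1 := add_one_lt_exp hx.ne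
    have h2 := exp_lt_one_iff.mpr hx
    rw [key m hm, exp_zero, sub_zero]
    have h3 : (exp (-rho / m) - 1) / (-rho / m) < 1 := by
      rw [div_lt_one_of_neg hx]
      linarith
    have h4 : 0 < (exp (-rho / m) - 1) / (-rho / m) :=
      div_pos_of_neg_of_neg (by linarith) hx
    constructor <;> linarith
  · have ha' : 0 < a := ha
    have hb' : 0 < b := hb
    have hlt : -rho / a < -rho / b := by
      rw [neg_div, neg_div, neg_lt_neg_iff]
      exact div_lt_div_of_pos_left hrho0 ha' hab
    have h := strictConvexOn_exp.secant_strict_mono (Set.mem_univ 0) (Set.mem_univ _)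
      (Set.mem_univ _) (hneg a ha').ne (hneg b hb').ne hlt
    rw [key a ha', key b hb']
    linarith
  · have hslope : Tendsto (fun x : ℝ => (exp x - exp 0) / (x - 0)) (nhdsWithin 0 {0}ᶜ)
        (nhds 1) := by
      have h := hasDerivAt_iff_tendsto_slope.mp (Real.hasDerivAt_exp 0)
      rw [exp_zero] at h
      refine h.congr fun x => ?_
      rw [slope_def_field]
    have hx : Tendsto (fun m : ℝ => -rho / m) atTop (nhdsWithin 0 {0}ᶜ) := by
      refine tendsto_nhdsWithin_iff.mpr ⟨tendsto_const_nhds.div_atTop tendsto_id, ?_⟩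
      filter_upwards [eventually_gt_atTop 0] with m hm
      exact (hneg m hm).ne
    have h := ((hslope.comp hx).const_sub 1).div_const 2
    rw [sub_self, zero_div] at h
    refine h.congr' ?_
    filter_upwards [eventually_gt_atTop 0] with m hm
    exact (key m hm).symm
end
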